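/- Let $\{v_n\}$ be a $1/2$-uniformly distributed sequence in $\mathbb{T}^d$, $d \geq 2$, and fix a distance $\frac{1}{100} \leq t < \frac12$. Then for every $\epsilon > 0$ there exists $C_\epsilon > 0$ such that $\#\{(n,m) \in [1,N]^2 : \|v_n - v_m\| = t\} \leq C_\epsilon N^{2 - \frac{2}{d+1} + \epsilon}$ for all $N$. -/

import Mathlib

open Finset MeasureTheory

/-- Euclidean norm of an integer vector `k ∈ ℤ^d`. -/
noncomputable def intNorm {d : ℕ} (k : Fin d → ℤ) : ℝ :=
  Real.sqrt (∑ i, ((k i : ℝ)) ^ 2)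

/-- The toral (Euclidean) norm on `𝕋^d = (ℝ/ℤ)^d`: the distance to the lattice `ℤ^d`. -/
noncomputable def torusNorm {d : ℕ} (x : Fin d → AddCircle (1:ℝ)) : ℝ :=
  Real.sqrt (∑ i, ‖x i‖ ^ 2)

/-- A sequence in `𝕋^d` is `γ`-uniformly distributed. -/
def IsGammaUDTorus {d : ℕ} (γ : ℝ) (v : ℕ → Fin d → AddCircle (1:ℝ)) : Prop :=
  ∀ ε : ℝ, 0 < ε → ∃ C : ℝ, 0 < C ∧ ∀ k : Fin d → ℤ, k ≠ 0 → ∀ N : ℕ, 1 ≤ N →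
    ‖(N : ℂ)⁻¹ * ∑ n ∈ Finset.range N, ∏ i, fourier (k i) (v n i)‖
      ≤ C * intNorm k ^ ε * (N : ℝ) ^ (-γ)


open UnitAddTorus

theorem integral_fourier_eq_ite (k : ℤ) :
    ∫ x : AddCircle (1:ℝ), fourier k x = if k = 0 then 1 else 0 := by
  split_ifs with h
  · simp [h, Measure.real]
  · exact integral_eq_zero_of_add_right_eq_neg (μ := volume) (fourier_add_half_inv_index h one_pos)

theorem integral_mFourier_eq_ite {d : ℕ} (k : Fin d → ℤ) :
    ∫ x : Fin d → AddCircle (1:ℝ), mFourier k x = if k = 0 then 1 else 0 := by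
  have h : ∀ x : Fin d → AddCircle (1:ℝ), mFourier k x = ∏ i, fourier (k i) (x i) := fun _ => rfl
  simp_rw [h]
  rw [integral_fintype_prod_volume_eq_prod (fun i (x : AddCircle (1:ℝ)) => (fourier (k i) x : ℂ))]
  simp_rw [integral_fourier_eq_ite]
  rw [Finset.prod_ite_zero]
  simp [funext_iff]

theorem integral_norm_sq_sum_mFourier {d : ℕ} (Q : Finset (Fin d → ℤ)) (b : (Fin d → ℤ) → ℂ) :
    ∫ x : Fin d → AddCircle (1:ℝ), ‖∑ k ∈ Q, b k * mFourier k x‖ ^ 2 = ∑ k ∈ Q, ‖b k‖ ^ 2 := by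
  have expand : ∀ x : Fin d → AddCircle (1:ℝ),
      ((‖∑ k ∈ Q, b k * mFourier k x‖ ^ 2 : ℝ) : ℂ) =
        ∑ k ∈ Q, ∑ l ∈ Q, b k * (starRingEnd ℂ) (b l) * mFourier (k - l) x := by
    intro x
    rw [Complex.ofReal_pow, ← Complex.mul_conj', map_sum, Finset.sum_mul_sum]
    refine Finset.sum_congr rfl fun k _ => Finset.sum_congr rfl fun l _ => ?_
    rw [map_mul, sub_eq_add_neg, mFourier_add, mFourier_neg]
    ring
  have hint : ∀ k : Fin d → ℤ,
      Integrable (fun x : Fin d → AddCircle (1:ℝ) => mFourier k x) := fun k =>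
    (mFourier k).continuous.integrable_of_hasCompactSupport (HasCompactSupport.of_compactSpace _)
  apply Complex.ofReal_injective
  rw [← integral_complex_ofReal]
  simp_rw [expand]
  rw [integral_finsetSum _ fun k _ => integrable_finsetSum _ fun l _ => (hint _).const_mul _]
  push_cast
  refine Finset.sum_congr rfl fun k hk => ?_
  rw [integral_finsetSum _ fun l _ => (hint _).const_mul _]
  simp_rw [integral_const_mul, integral_mFourier_eq_ite, sub_eq_zero]
  simp [hk, Complex.mul_conj']

theorem measurePreserving_coe_torus {d : ℕ} : MeasurePreserving
    (fun (z : Fin d → ℝ) i => (z i : AddCircle (1:ℝ)))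
    (volume.restrict (Set.univ.pi fun _ => Set.Ioc (-(1/2)) (-(1/2) + 1))) volume := by
  have := measurePreserving_pi (ι := Fin d) _ _ (fun _ => AddCircle.measurePreserving_mk 1 (-(1/2)))
  rwa [← Measure.restrict_pi_pi] at this

theorem torusNorm_coe {d : ℕ} {z : Fin d → ℝ}
    (hz : z ∈ Set.univ.pi fun _ : Fin d => Set.Ioc (-(1/2) : ℝ) (-(1/2) + 1)) :
    torusNorm (fun i => (z i : AddCircle (1:ℝ))) = ‖WithLp.toLp 2 z‖ := by
  rw [EuclideanSpace.norm_eq, torusNorm]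
  congr 1
  refine Finset.sum_congr rfl fun i _ => ?_
  have h := hz i trivial
  rw [(AddCircle.norm_coe_eq_abs_iff (p := (1:ℝ)) one_ne_zero).2, Real.norm_eq_abs]
  rw [abs_le, abs_one]
  constructor <;> linarith [h.1, h.2]

theorem continuous_torusNorm {d : ℕ} : Continuous (torusNorm (d := d)) := by
  unfold torusNorm
  fun_prop

theorem torusNorm_eq_norm {d : ℕ} (x : Fin d → AddCircle (1:ℝ)) :
    torusNorm x = ‖WithLp.toLp 2 fun i => ‖x i‖‖ := by
  simp [EuclideanSpace.norm_eq, torusNorm]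

theorem abs_torusNorm_sub_le {d : ℕ} {x y : Fin d → AddCircle (1:ℝ)} {ρ : ℝ} (hρ : 0 ≤ ρ)
    (h : ∀ i, ‖x i - y i‖ ≤ ρ) : |torusNorm x - torusNorm y| ≤ Real.sqrt d * ρ := by
  rw [torusNorm_eq_norm, torusNorm_eq_norm]
  refine (abs_norm_sub_norm_le _ _).trans ?_
  rw [EuclideanSpace.norm_eq, Real.sqrt_le_left (by positivity), mul_pow,
    Real.sq_sqrt (by positivity)]
  calc _ ≤ ∑ _i : Fin d, ρ ^ 2 := by
        gcongr with i
        exact (abs_norm_sub_norm_le _ _).trans (h i)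
    _ = _ := by simp

theorem exists_measureReal_annulus_le (d : ℕ) (hd : d ≠ 0) (t : ℝ) (ht : 0 < t) :
    ∃ K : ℝ, 0 < K ∧ ∀ r : ℝ, 0 ≤ r →
      volume.real {x : Fin d → AddCircle (1:ℝ) | |torusNorm x - t| ≤ r} ≤ K * r := by
  have : Nonempty (Fin d) := ⟨⟨0, Nat.pos_of_ne_zero hd⟩⟩
  set E := EuclideanSpace ℝ (Fin d)
  set V := volume.real (Metric.ball (0 : E) 1)
  refine ⟨1 / t + V * (2 * d * (2 * t) ^ (d - 1)), by positivity, fun r hr => ?_⟩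
  have hfin : volume.real (Set.univ : Set (Fin d → AddCircle (1:ℝ))) = 1 := by
    simp [Measure.real, volume_pi, Measure.pi_univ]
  rcases lt_or_ge t r with htr | htr
  · refine (measureReal_mono (Set.subset_univ _)).trans ?_
    rw [hfin, add_mul]
    have : 1 ≤ 1 / t * r := by rw [one_div, inv_mul_eq_div, le_div_iff₀ ht]; linarith
    have : 0 ≤ V * (2 * d * (2 * t) ^ (d - 1)) * r := by positivity
    linarith
  have hmeas : MeasurableSet {x : Fin d → AddCircle (1:ℝ) | |torusNorm x - t| ≤ r} :=
    (isClosed_le (by have := continuous_torusNorm (d := d); fun_prop) continuous_const).measurableSet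
  have hpre := measurePreserving_coe_torus (d := d) |>.measure_preimage hmeas.nullMeasurableSet
  have hsub : volume {x : Fin d → AddCircle (1:ℝ) | |torusNorm x - t| ≤ r} ≤
      volume (Metric.closedBall (0:E) (t + r) \ Metric.ball 0 (t - r)) := by
    rw [← hpre, Measure.restrict_apply (measurePreserving_coe_torus.measurable hmeas),
      ← (PiLp.volume_preserving_toLp (Fin d)).measure_preimage
        (measurableSet_closedBall.diff measurableSet_ball).nullMeasurableSet]
    refine measure_mono ?_
    rintro z ⟨hz, hz'⟩
    simp only [Set.mem_preimage, Set.mem_ofPred_eq] at hz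
    rw [torusNorm_coe hz', abs_le] at hz
    simp only [Set.mem_preimage, Set.mem_sdiff, Metric.mem_closedBall, Metric.mem_ball,
      dist_zero_right, not_lt]
    constructor <;> linarith [hz.1, hz.2]
  have hreal : volume.real {x : Fin d → AddCircle (1:ℝ) | |torusNorm x - t| ≤ r} ≤
      volume.real (Metric.closedBall (0:E) (t + r) \ Metric.ball 0 (t - r)) := by
    refine ENNReal.toReal_mono ?_ hsub
    exact ((measure_mono Set.sdiff_subset).trans_lt measure_closedBall_lt_top).ne
  refine hreal.trans ?_
  rw [measureReal_sdiff ((Metric.ball_subset_ball (by linarith)).trans Metric.ball_subset_closedBall)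
    measurableSet_ball measure_closedBall_lt_top.ne,
    ← Measure.addHaar_real_closedBall_eq_addHaar_real_ball _ _ (t - r),
    Measure.addHaar_real_closedBall _ _ (by linarith), Measure.addHaar_real_closedBall _ _ (by linarith), finrank_euclideanSpace_fin, ← sub_mul]
  have hpow : (t + r) ^ d - (t - r) ^ d ≤ 2 * d * (2 * t) ^ (d - 1) * r := by
    have := (le_abs_self _).trans (abs_pow_sub_pow_le (t + r) (t - r) d)
    rw [abs_of_nonneg (by linarith : 0 ≤ t + r - (t - r)), abs_of_nonneg (by linarith : 0 ≤ t + r),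
      abs_of_nonneg (by linarith : 0 ≤ t - r), max_eq_left (by linarith)] at this
    refine this.trans ?_
    have : 0 ≤ t + r - (t - r) := by linarith
    calc _ ≤ (t + r - (t - r)) * d * (2 * t) ^ (d - 1) := by gcongr; linarith
      _ = _ := by ring
  calc _ ≤ 2 * d * (2 * t) ^ (d - 1) * r * V := by gcongr
    _ ≤ _ := by
      have : 0 ≤ 1 / t * r := by positivity
      linarith

theorem mFourier_sub_apply {d : ℕ} (k : Fin d → ℤ) (x y : Fin d → AddCircle (1:ℝ)) :
    mFourier k (x - y) = mFourier k x * (starRingEnd ℂ) (mFourier k y) := by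
  rw [← mFourier_neg]
  simp only [mFourier, ContinuousMap.coe_mk, ← Finset.prod_mul_distrib]
  refine Finset.prod_congr rfl fun i _ => ?_
  simp only [fourier_apply, Pi.sub_apply, Pi.neg_apply]
  rw [smul_sub, sub_eq_add_neg, AddCircle.toCircle_add, neg_smul, Circle.coe_mul]

theorem half_le_norm_sum_fourier {M : ℕ} (hM : 0 < M) {x : AddCircle (1:ℝ)}
    (hx : ‖x‖ ≤ 1 / (8 * M)) :
    (M / 2 : ℝ) ≤ ‖∑ j ∈ Finset.Ico (0:ℤ) M, (fourier j x : ℂ)‖ := by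
  obtain ⟨z, hz, rfl⟩ : ∃ z ∈ Set.Ico (-(1/2) : ℝ) (-(1/2) + 1), (z : AddCircle (1:ℝ)) = x := by
    have := Set.mem_univ x
    rwa [← AddCircle.coe_image_Ico_eq 1 (-(1/2))] at this
  rw [(AddCircle.norm_coe_eq_abs_iff (p := (1:ℝ)) one_ne_zero).2
    (by rw [abs_le, abs_one]; constructor <;> linarith [hz.1, hz.2])] at hx
  refine le_trans ?_ (Complex.re_le_norm _)
  rw [Complex.re_sum]
  have hterm : ∀ j ∈ Finset.Ico (0:ℤ) M, (1 / 2 : ℝ) ≤ (fourier j (z : AddCircle (1:ℝ)) : ℂ).re := by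
    intro j hj
    rw [Finset.mem_Ico] at hj
    have h : (fourier j (z : AddCircle (1:ℝ)) : ℂ) =
        Complex.exp (((2 * Real.pi * j * z : ℝ) : ℂ) * Complex.I) := by
      rw [fourier_coe_apply]
      congr 1
      push_cast
      ring
    rw [h, Complex.exp_ofReal_mul_I_re, ← Real.cos_pi_div_three, ← Real.cos_abs (2 * _ * _ * _)]
    have hj0 : (0:ℝ) ≤ j := by exact_mod_cast hj.1
    have hjM : (j:ℝ) ≤ M := by exact_mod_cast hj.2.le
    have hM' : (0:ℝ) < M := by exact_mod_cast hM
    have hjz : (j:ℝ) * |z| ≤ 1 / 8 := by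
      calc (j:ℝ) * |z| ≤ M * (1 / (8 * M)) := by gcongr
        _ = 1 / 8 := by field_simp
    have habs : |2 * Real.pi * j * z| = 2 * Real.pi * (j * |z|) := by
      rw [abs_mul, abs_of_nonneg (by positivity)]
      ring
    apply Real.cos_le_cos_of_nonneg_of_le_pi (abs_nonneg _)
    · linarith [Real.pi_pos]
    · rw [habs]
      nlinarith [Real.pi_pos]
  calc (M / 2 : ℝ) = ∑ _j ∈ Finset.Ico (0:ℤ) M, (1 / 2 : ℝ) := by simp; ring
    _ ≤ _ := Finset.sum_le_sum hterm

/-- The Dirichlet kernel on `𝕋^d` with frequencies in the box `[0, M)^d`. -/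
noncomputable def boxKernel (d M : ℕ) (x : Fin d → AddCircle (1:ℝ)) : ℂ :=
  ∑ j ∈ Fintype.piFinset fun _ : Fin d => Finset.Ico (0:ℤ) M, mFourier j x

theorem continuous_boxKernel (d M : ℕ) : Continuous (boxKernel d M) := by
  unfold boxKernel
  fun_prop

theorem le_norm_boxKernel {d M : ℕ} (hM : 0 < M) {x : Fin d → AddCircle (1:ℝ)}
    (hx : ∀ i, ‖x i‖ ≤ 1 / (8 * M)) : (M / 2 : ℝ) ^ d ≤ ‖boxKernel d M x‖ := by
  have h : boxKernel d M x = ∏ i, ∑ j ∈ Finset.Ico (0:ℤ) M, (fourier j (x i) : ℂ) := by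
    rw [Finset.prod_univ_sum]
    rfl
  rw [h, norm_prod]
  calc (M / 2 : ℝ) ^ d = ∏ _i : Fin d, (M / 2 : ℝ) := by
        rw [Finset.prod_const, Finset.card_univ, Fintype.card_fin]
    _ ≤ _ := Finset.prod_le_prod (fun _ _ => by positivity)
      fun i _ => half_le_norm_sum_fourier hM (hx i)

theorem exists_sum_norm_sq_boxKernel_eq (d M N : ℕ) (v : ℕ → Fin d → AddCircle (1:ℝ)) :
    ∃ r : (Fin d → ℤ) → ℕ, (∀ k, r k ≤ M ^ d) ∧ ∀ y,
      ((∑ p ∈ range N ×ˢ range N, ‖boxKernel d M (y - (v p.1 - v p.2))‖ ^ 2 : ℝ) : ℂ) =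
      ∑ k ∈ Fintype.piFinset fun _ : Fin d => Finset.Icc (-M : ℤ) M,
        (r k * ‖∑ n ∈ range N, mFourier k (v n)‖ ^ 2 : ℂ) * mFourier k y := by
  set B := Fintype.piFinset fun _ : Fin d => Finset.Ico (0:ℤ) M with hB
  set Q := Fintype.piFinset fun _ : Fin d => Finset.Icc (-M : ℤ) M with hQ
  refine ⟨fun k => #{q ∈ B ×ˢ B | q.1 - q.2 = k}, fun k => ?_, fun y => ?_⟩
  · calc #{q ∈ B ×ˢ B | q.1 - q.2 = k} ≤ #B := by
          refine Finset.card_le_card_of_injOn Prod.snd (fun q hq => ?_) fun q hq q' hq' h => ?_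
          · simp only [Finset.coe_filter, Finset.mem_product, Set.mem_ofPred_eq] at hq
            exact hq.1.2
          · simp only [Finset.coe_filter, Finset.mem_product, Set.mem_ofPred_eq] at hq hq'
            refine Prod.ext ?_ h
            rw [sub_eq_iff_eq_add.1 hq.2, sub_eq_iff_eq_add.1 hq'.2, h]
      _ = M ^ d := by simp [hB]
  · have hkernel : ∀ x, ((‖boxKernel d M x‖ ^ 2 : ℝ) : ℂ) =
        ∑ q ∈ B ×ˢ B, mFourier (q.1 - q.2) x := by
      intro x
      rw [Complex.ofReal_pow, ← Complex.mul_conj', boxKernel, map_sum, Finset.sum_mul_sum,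
        ← Finset.sum_product']
      refine Finset.sum_congr rfl fun q _ => ?_
      rw [sub_eq_add_neg, mFourier_add, mFourier_neg]
    have hS : ∀ k : Fin d → ℤ, ∑ p ∈ range N ×ˢ range N, mFourier k (y - (v p.1 - v p.2)) =
        (‖∑ n ∈ range N, mFourier k (v n)‖ ^ 2 : ℂ) * mFourier k y := by
      intro k
      rw [← Complex.conj_mul', map_sum, Finset.sum_mul_sum, ← Finset.sum_product', Finset.sum_mul]
      refine Finset.sum_congr rfl fun p _ => ?_
      rw [mFourier_sub_apply, mFourier_sub_apply, map_mul, Complex.conj_conj]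
      ring
    have hmaps : ∀ q ∈ B ×ˢ B, q.1 - q.2 ∈ Q := by
      intro q hq
      simp only [hB, hQ, Finset.mem_product, Fintype.mem_piFinset, Finset.mem_Ico,
        Finset.mem_Icc, Pi.sub_apply] at hq ⊢
      intro i
      have h1 := hq.1 i
      have h2 := hq.2 i
      constructor <;> linarith
    rw [Complex.ofReal_sum]
    simp_rw [hkernel]
    rw [Finset.sum_comm, ← Finset.sum_fiberwise_of_maps_to hmaps]
    refine Finset.sum_congr rfl fun k _ => ?_
    rw [Finset.sum_congr rfl (g := fun _ => (‖∑ n ∈ range N, mFourier k (v n)‖ ^ 2 : ℂ) *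
      mFourier k y) fun q hq => by rw [(Finset.mem_filter.1 hq).2, hS]]
    rw [Finset.sum_const, nsmul_eq_mul]
    ring

theorem measureReal_closedBall_torus {d M : ℕ} (hM : 0 < M) (w : Fin d → AddCircle (1:ℝ)) :
    volume.real (Metric.closedBall w (1 / (8 * M))) = (1 / (4 * M) : ℝ) ^ d := by
  have hM' : (1:ℝ) ≤ M := by exact_mod_cast hM
  have h2 : 2 * (1 / (8 * M) : ℝ) = 1 / (4 * M) := by field_simp; norm_num
  have h1 : min 1 (2 * (1 / (8 * M) : ℝ)) = 1 / (4 * M) := by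
    rw [h2]
    apply min_eq_right
    rw [div_le_one (by positivity)]
    linarith
  rw [closedBall_pi _ (by positivity), Measure.real, volume_pi_pi]
  simp only [AddCircle.volume_closedBall, h1]
  rw [Finset.prod_const, Finset.card_univ, Fintype.card_fin, ENNReal.toReal_pow,
    ENNReal.toReal_ofReal (by positivity)]

open scoped Classical in
theorem card_torusNorm_eq_le_setIntegral {d M N : ℕ} (hM : 0 < M)
    (v : ℕ → Fin d → AddCircle (1:ℝ)) (t : ℝ) :
    (#{p ∈ range N ×ˢ range N | torusNorm (v p.1 - v p.2) = t} : ℝ) * (M / 16 : ℝ) ^ d ≤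
      ∫ y in {y : Fin d → AddCircle (1:ℝ) | |torusNorm y - t| ≤ Real.sqrt d * (1 / (8 * M))},
        ∑ p ∈ range N ×ˢ range N, ‖boxKernel d M (y - (v p.1 - v p.2))‖ ^ 2 := by
  set A := {y : Fin d → AddCircle (1:ℝ) | |torusNorm y - t| ≤ Real.sqrt d * (1 / (8 * M))}
  have hint : ∀ (w : Fin d → AddCircle (1:ℝ)) (s : Set (Fin d → AddCircle (1:ℝ))),
      IntegrableOn (fun y => ‖boxKernel d M (y - w)‖ ^ 2) s := fun w s => by
    have := continuous_boxKernel d M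
    exact (Continuous.integrable_of_hasCompactSupport (by fun_prop)
      (HasCompactSupport.of_compactSpace _)).integrableOn
  rw [integral_finsetSum _ fun p _ => hint _ _]
  refine le_trans ?_ (Finset.sum_le_sum_of_subset_of_nonneg (Finset.filter_subset
    (fun p => torusNorm (v p.1 - v p.2) = t) _) fun p _ _ => integral_nonneg fun y => by positivity)
  rw [← nsmul_eq_mul]
  refine Finset.card_nsmul_le_sum _ _ _ fun p hp => ?_
  have hpt := (Finset.mem_filter.1 hp).2
  set w := v p.1 - v p.2
  have hball : ∀ y ∈ Metric.closedBall w (1 / (8 * M) : ℝ), ∀ i, ‖y i - w i‖ ≤ 1 / (8 * M) := by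
    intro y hy i
    rw [← dist_eq_norm]
    exact (dist_le_pi_dist y w i).trans hy
  have hsub : Metric.closedBall w (1 / (8 * M) : ℝ) ⊆ A := fun y hy => by
    have := abs_torusNorm_sub_le (by positivity) (hball y hy)
    rwa [hpt] at this
  calc (M / 16 : ℝ) ^ d = ∫ _y in Metric.closedBall w (1 / (8 * M) : ℝ), ((M / 2 : ℝ) ^ d) ^ 2 := by
        rw [setIntegral_const, measureReal_closedBall_torus hM, smul_eq_mul, ← pow_mul, mul_comm d,
          pow_mul, ← mul_pow]
        congr 1
        field_simp
        norm_num
    _ ≤ ∫ y in Metric.closedBall w (1 / (8 * M) : ℝ), ‖boxKernel d M (y - w)‖ ^ 2 := by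
        refine setIntegral_mono_on (integrableOn_const measure_closedBall_lt_top.ne) (hint _ _)
          measurableSet_closedBall fun y hy => ?_
        gcongr
        exact le_norm_boxKernel hM (hball y hy)
    _ ≤ _ := setIntegral_mono_set (hint _ _) (ae_of_all _ fun y => by positivity)
        hsub.eventuallyLE

open scoped Classical in
theorem card_torusNorm_eq_le {d M N : ℕ} (hM : 0 < M) (hN : 0 < N)
    (v : ℕ → Fin d → AddCircle (1:ℝ)) (t : ℝ) {L : ℝ} (hL : 0 < L)
    (hS : ∀ k ∈ Fintype.piFinset fun _ : Fin d => Finset.Icc (-M : ℤ) M, k ≠ 0 →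
      ‖∑ n ∈ range N, mFourier k (v n)‖ ^ 2 ≤ L) :
    (#{p ∈ range N ×ˢ range N | torusNorm (v p.1 - v p.2) = t} : ℝ) ≤
      16 ^ d * ((N ^ 2 + L * N) * volume.real
        {y : Fin d → AddCircle (1:ℝ) | |torusNorm y - t| ≤ Real.sqrt d * (1 / (8 * M))}
        + (2 * M + 1) ^ d * L / N) := by
  have hlow := card_torusNorm_eq_le_setIntegral (N := N) hM v t
  set A := {y : Fin d → AddCircle (1:ℝ) | |torusNorm y - t| ≤ Real.sqrt d * (1 / (8 * M))}
  obtain ⟨r, hr, hexp⟩ := exists_sum_norm_sq_boxKernel_eq d M N v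
  set Q := Fintype.piFinset fun _ : Fin d => Finset.Icc (-M : ℤ) M with hQ
  set b : (Fin d → ℤ) → ℂ := fun k => (r k * ‖∑ n ∈ range N, mFourier k (v n)‖ ^ 2 : ℂ)
  have hM' : (0:ℝ) < M := by exact_mod_cast hM
  have hN' : (0:ℝ) < N := by exact_mod_cast hN
  have hb : ∀ k, ‖b k‖ = r k * ‖∑ n ∈ range N, mFourier k (v n)‖ ^ 2 := fun k => by simp [b]
  have hrM : ∀ k, (r k : ℝ) ≤ M ^ d := fun k => by exact_mod_cast hr k
  have hb0 : ‖b 0‖ ≤ M ^ d * N ^ 2 := by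
    rw [hb]
    gcongr
    · exact hrM 0
    · simp [mFourier_zero]
  have hbk : ∀ k ∈ Q.erase 0, ‖b k‖ ≤ M ^ d * L := fun k hk => by
    rw [hb]
    have := Finset.mem_erase.1 hk
    gcongr
    · exact hrM k
    · exact hS k this.2 this.1
  set F : (Fin d → AddCircle (1:ℝ)) → ℂ := fun y => ∑ k ∈ Q.erase 0, b k * mFourier k y with hF
  have hFc : Continuous F := by fun_prop
  have hFint : Integrable fun y => ‖F y‖ ^ 2 :=
    Continuous.integrable_of_hasCompactSupport (by fun_prop) (HasCompactSupport.of_compactSpace _)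
  set lam : ℝ := M ^ d * L * N with hlam
  have hlam0 : 0 < lam := by positivity
  have hpoint : ∀ y, ∑ p ∈ range N ×ˢ range N, ‖boxKernel d M (y - (v p.1 - v p.2))‖ ^ 2 ≤
      (M ^ d * N ^ 2 + lam) + lam⁻¹ * ‖F y‖ ^ 2 := by
    intro y
    have h0 : (0 : Fin d → ℤ) ∈ Q := by simp [hQ]
    have hsplit : ‖((∑ p ∈ range N ×ˢ range N, ‖boxKernel d M (y - (v p.1 - v p.2))‖ ^ 2 : ℝ) : ℂ)‖
        ≤ ‖b 0‖ + ‖F y‖ := by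
      rw [hexp, ← Finset.add_sum_erase _ _ h0]
      refine (norm_add_le _ _).trans_eq ?_
      simp [mFourier_zero, hF, b]
    rw [Complex.norm_real] at hsplit
    have hsq : ‖F y‖ ≤ lam + lam⁻¹ * ‖F y‖ ^ 2 := by
      have : lam + lam⁻¹ * ‖F y‖ ^ 2 - ‖F y‖ =
          lam⁻¹ * ((lam - ‖F y‖ / 2) ^ 2 + 3 / 4 * ‖F y‖ ^ 2) := by
        field_simp
        ring
      have : 0 ≤ lam⁻¹ * ((lam - ‖F y‖ / 2) ^ 2 + 3 / 4 * ‖F y‖ ^ 2) := by positivity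
      linarith
    linarith [Real.le_norm_self
      (∑ p ∈ range N ×ˢ range N, ‖boxKernel d M (y - (v p.1 - v p.2))‖ ^ 2)]
  have hcard : (#Q : ℝ) = (2 * M + 1) ^ d := by
    have : ((M:ℤ) + 1 + M).toNat = 2 * M + 1 := by omega
    simp [hQ, this]
  have hsum : ∫ y in A, ‖F y‖ ^ 2 ≤ (2 * M + 1) ^ d * (M ^ d * L) ^ 2 := by
    calc ∫ y in A, ‖F y‖ ^ 2 ≤ ∫ y, ‖F y‖ ^ 2 :=
          setIntegral_le_integral hFint (ae_of_all _ fun y => by positivity)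
      _ = ∑ k ∈ Q.erase 0, ‖b k‖ ^ 2 := integral_norm_sq_sum_mFourier _ _
      _ ≤ ∑ k ∈ Q.erase 0, (M ^ d * L) ^ 2 := by
          gcongr with k hk
          exact hbk k hk
      _ ≤ ∑ k ∈ Q, (M ^ d * L) ^ 2 :=
          Finset.sum_le_sum_of_subset_of_nonneg (Finset.erase_subset _ _)
            fun _ _ _ => by positivity
      _ = _ := by rw [Finset.sum_const, nsmul_eq_mul, hcard]
  have hupper : ∫ y in A, ∑ p ∈ range N ×ˢ range N, ‖boxKernel d M (y - (v p.1 - v p.2))‖ ^ 2 ≤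
      volume.real A * (M ^ d * N ^ 2 + lam) +
        lam⁻¹ * ((2 * M + 1) ^ d * (M ^ d * L) ^ 2) := by
    have hD := continuous_boxKernel d M
    calc _ ≤ ∫ y in A, ((M ^ d * N ^ 2 + lam) + lam⁻¹ * ‖F y‖ ^ 2) := by
          refine integral_mono (Integrable.integrableOn ?_)
            ((integrable_const _).add (hFint.integrableOn.const_mul _)) hpoint
          exact Continuous.integrable_of_hasCompactSupport (by fun_prop)
            (HasCompactSupport.of_compactSpace _)
      _ = volume.real A * (M ^ d * N ^ 2 + lam) + lam⁻¹ * ∫ y in A, ‖F y‖ ^ 2 := by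
          rw [integral_add (integrable_const _) (hFint.integrableOn.const_mul _),
            setIntegral_const, integral_const_mul, smul_eq_mul]
      _ ≤ _ := by gcongr
  have htotal := hlow.trans hupper
  have hpos : (0:ℝ) < (M / 16 : ℝ) ^ d := by positivity
  refine le_of_mul_le_mul_right (htotal.trans_eq ?_) hpos
  rw [hlam, div_pow]
  field_simp

theorem intNorm_le {d M : ℕ} {k : Fin d → ℤ}
    (hk : k ∈ Fintype.piFinset fun _ : Fin d => Finset.Icc (-M : ℤ) M) :
    intNorm k ≤ Real.sqrt d * M := by
  rw [intNorm, Real.sqrt_le_left (by positivity), mul_pow, Real.sq_sqrt (by positivity)]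
  calc ∑ i, (k i : ℝ) ^ 2 ≤ ∑ _i : Fin d, (M : ℝ) ^ 2 := by
        refine Finset.sum_le_sum fun i _ => sq_le_sq' ?_ ?_
        · exact_mod_cast (Finset.mem_Icc.1 (Fintype.mem_piFinset.1 hk i)).1
        · exact_mod_cast (Finset.mem_Icc.1 (Fintype.mem_piFinset.1 hk i)).2
    _ = _ := by simp

theorem norm_sq_sum_mFourier_le {d M N : ℕ} {v : ℕ → Fin d → AddCircle (1:ℝ)} {ε C : ℝ}
    (hε : 0 ≤ ε) (hC : 0 ≤ C) (hN : 0 < N) {k : Fin d → ℤ}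
    (hUD : ‖(N : ℂ)⁻¹ * ∑ n ∈ range N, ∏ i, fourier (k i) (v n i)‖ ≤
      C * intNorm k ^ ε * (N : ℝ) ^ (-(1 / 2) : ℝ))
    (hk : k ∈ Fintype.piFinset fun _ : Fin d => Finset.Icc (-M : ℤ) M) :
    ‖∑ n ∈ range N, mFourier k (v n)‖ ^ 2 ≤ C ^ 2 * (Real.sqrt d * M) ^ (2 * ε) * N := by
  have hN' : (0:ℝ) < N := by exact_mod_cast hN
  have hk0 : 0 ≤ intNorm k := Real.sqrt_nonneg _
  have h : ‖∑ n ∈ range N, mFourier k (v n)‖ ≤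
      N * (C * (Real.sqrt d * M) ^ ε * (N : ℝ) ^ (-(1 / 2) : ℝ)) := by
    rw [norm_mul, norm_inv, Complex.norm_natCast, inv_mul_le_iff₀ hN'] at hUD
    refine hUD.trans ?_
    gcongr
    exact intNorm_le hk
  calc _ ≤ (N * (C * (Real.sqrt d * M) ^ ε * (N : ℝ) ^ (-(1 / 2) : ℝ))) ^ 2 := by gcongr
    _ = C ^ 2 * ((Real.sqrt d * M) ^ ε) ^ 2 * (N ^ 2 * ((N : ℝ) ^ (-(1 / 2) : ℝ)) ^ 2) := by ring
    _ = _ := by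
      rw [← Real.rpow_mul_natCast (by positivity), ← Real.rpow_mul_natCast (by positivity)]
      norm_num
      rw [Real.rpow_neg_one]
      field_simp

open scoped Classical in
/-- For a `1/2`-uniformly distributed sequence in `𝕋^d`, `d ≥ 2`, and a fixed distance
`1/100 ≤ t < 1/2`, the number of pairs at toral distance exactly `t` is at most
`C_ε N^{2 - 2/(d+1) + ε}`. -/
theorem stmt10 (d : ℕ) (hd : 2 ≤ d)
    (v : ℕ → Fin d → AddCircle (1:ℝ)) (hUD : IsGammaUDTorus (1/2) v)
    (t : ℝ) (ht : 1/100 ≤ t) (ht2 : t < 1/2) :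
    ∀ ε : ℝ, 0 < ε → ∃ C : ℝ, 0 < C ∧ ∀ N : ℕ, 1 ≤ N →
      ((((Finset.range N) ×ˢ (Finset.range N)).filter
          (fun p => torusNorm (v p.1 - v p.2) = t)).card : ℝ)
        ≤ C * (N : ℝ) ^ (2 - 2/(d+1) + ε) := by
  intro ε hε
  obtain ⟨C, hC, hUD⟩ := hUD (ε / 2) (by positivity)
  obtain ⟨K, hK, hvol⟩ := exists_measureReal_annulus_le d (by omega) t (by linarith)
  have hd' : (0:ℝ) < d := by positivity
  set a : ℝ := 2 / (d + 1) with ha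
  have ha0 : 0 < a := by positivity
  have ha1 : a ≤ 1 := by
    rw [ha, div_le_one (by positivity)]
    have : (2:ℝ) ≤ d := by exact_mod_cast hd
    linarith
  set G : ℝ := C ^ 2 * (2 * Real.sqrt d) ^ ε with hG
  have hG0 : 0 < G := by positivity
  set K' : ℝ := K * Real.sqrt d with hK'
  refine ⟨16 ^ d * ((1 + G) * K' + 6 ^ d * G), by positivity, fun N hN => ?_⟩
  have hN1 : (1:ℝ) ≤ N := by exact_mod_cast hN
  have hN0 : (0:ℝ) < N := by linarith
  set M : ℕ := ⌈(N:ℝ) ^ a⌉₊ with hM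
  have hNa1 : 1 ≤ (N:ℝ) ^ a := Real.one_le_rpow hN1 ha0.le
  have hMlow : (N:ℝ) ^ a ≤ M := Nat.le_ceil _
  have hMup : (M:ℝ) ≤ 2 * (N:ℝ) ^ a := by
    have := Nat.ceil_lt_add_one (a := (N:ℝ) ^ a) (by positivity)
    linarith
  have hMN : (M:ℝ) ≤ 2 * N := hMup.trans (by
    gcongr
    calc (N:ℝ) ^ a ≤ (N:ℝ) ^ (1:ℝ) := Real.rpow_le_rpow_of_exponent_le hN1 ha1
      _ = N := Real.rpow_one _)
  have hM0 : 0 < M := by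
    have : (0:ℝ) < M := by linarith
    exact_mod_cast this
  have hM1 : (1:ℝ) ≤ M := by linarith
  have hmain := card_torusNorm_eq_le hM0 hN v t (L := G * N ^ ε * N) (by positivity)
    fun k hk hk0 => by
      refine (norm_sq_sum_mFourier_le (by positivity) hC.le hN (hUD k hk0 N hN) hk).trans ?_
      rw [hG, mul_assoc (C ^ 2) (_ ^ ε), ← Real.mul_rpow (by positivity) (by positivity),
        mul_div_cancel₀ _ two_ne_zero, mul_comm 2 (Real.sqrt d), mul_assoc (Real.sqrt d)]
      gcongr
  have hNε : 1 ≤ (N:ℝ) ^ ε := Real.one_le_rpow hN1 hε.le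
  have hvolM : volume.real {y : Fin d → AddCircle (1:ℝ) |
      |torusNorm y - t| ≤ Real.sqrt d * (1 / (8 * M))} ≤ K' * (N:ℝ) ^ (-a) := by
    refine (hvol _ (by positivity)).trans ?_
    rw [hK', mul_assoc, Real.rpow_neg hN0.le]
    gcongr
    rw [one_div]
    gcongr
    linarith
  have hpow : (2 * M + 1 : ℝ) ^ d ≤ 6 ^ d * (N:ℝ) ^ (2 - a) := by
    calc (2 * M + 1 : ℝ) ^ d ≤ (6 * (N:ℝ) ^ a) ^ d := by
          gcongr
          linarith
      _ = 6 ^ d * (N:ℝ) ^ (2 - a) := by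
          rw [mul_pow, ← Real.rpow_mul_natCast hN0.le]
          congr 2
          rw [ha]
          field_simp
          ring
  refine hmain.trans ?_
  rw [mul_assoc (16 ^ d)]
  gcongr
  calc ((N:ℝ) ^ 2 + G * N ^ ε * N * N) * _ + (2 * M + 1 : ℝ) ^ d * (G * N ^ ε * N) / N
      ≤ ((N:ℝ) ^ 2 * N ^ ε + G * N ^ ε * N * N) * (K' * (N:ℝ) ^ (-a)) +
          (6 ^ d * (N:ℝ) ^ (2 - a)) * (G * N ^ ε * N) / N := by
        gcongr
        exact le_mul_of_one_le_right (by positivity) hNε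
    _ = ((1 + G) * K') * ((N:ℝ) ^ 2 * N ^ (-a) * N ^ ε) +
          6 ^ d * G * ((N:ℝ) ^ (2 - a) * N ^ ε) := by
        field_simp
    _ = _ := by
        rw [← Real.rpow_natCast, ← Real.rpow_add hN0, ← Real.rpow_add hN0, ← Real.rpow_add hN0]
        push_cast
        rw [← sub_eq_add_neg]
        ring
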